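/- If values a, b ∈ D(v) of a binary CSP are neighborhood interchangeable, then for every set S of variables with v ∉ S, a and b are neighborhood tuple interchangeable with respect to S. -/

import Mathlib

/-- A binary CSP: variables `V`, a domain `dom v ⊆ α` for each variable, a symmetric
irreflexive relation `hasCstr` telling which pairs of distinct variables are related by a
constraint, and for related variables the symmetric compatibility relation `compat`. -/
structure BinaryCSP (V α : Type) where
  dom : V → Set α
  hasCstr : V → V → Prop
  compat : V → α → V → α → Prop
  hasCstr_symm : ∀ {v w}, hasCstr v w → hasCstr w v
  hasCstr_irrefl : ∀ v, ¬ hasCstr v v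
  compat_symm : ∀ {v w} {a c}, compat v a w c → compat w c v a

namespace BinaryCSP

variable {V α : Type}

/-- A solution: an assignment in the domains satisfying all constraints. -/
def Solution (P : BinaryCSP V α) (s : V → α) : Prop :=
  (∀ v, s v ∈ P.dom v) ∧ ∀ v w, P.hasCstr v w → P.compat v (s v) w (s w)

/-- The support set of value `a` for variable `v` at a variable `w`:
the domain values of `w` compatible with `v = a`. -/
def Support (P : BinaryCSP V α) (v : V) (a : α) (w : V) : Set α :=
  {c | c ∈ P.dom w ∧ P.compat v a w c}

/-- A solution of the subproblem induced by the set `S` of variables. -/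
def SubSolution (P : BinaryCSP V α) (S : Set V) (s : V → α) : Prop :=
  (∀ v ∈ S, s v ∈ P.dom v) ∧
    ∀ v ∈ S, ∀ w ∈ S, P.hasCstr v w → P.compat v (s v) w (s w)

/-- Neighborhood interchangeability (NI) of values `a`, `b` for variable `v`. -/
def NI (P : BinaryCSP V α) (v : V) (a b : α) : Prop :=
  ∀ w, P.hasCstr v w → P.Support v a w = P.Support v b w

/-- Full interchangeability (FI) of values `a`, `b` for variable `v`. -/
def FI [DecidableEq V] (P : BinaryCSP V α) (v : V) (a b : α) : Prop :=
  (∀ s, P.Solution s → s v = a → P.Solution (Function.update s v b)) ∧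
  (∀ s, P.Solution s → s v = b → P.Solution (Function.update s v a))

/-- Full interchangeability of `a`, `b` for `v` in the subproblem induced by `S`. -/
def SubFI [DecidableEq V] (P : BinaryCSP V α) (S : Set V) (v : V) (a b : α) : Prop :=
  (∀ s, P.SubSolution S s → s v = a → P.SubSolution S (Function.update s v b)) ∧
  (∀ s, P.SubSolution S s → s v = b → P.SubSolution S (Function.update s v a))

/-- Subproblem interchangeability (SPrI) with respect to `S` (where `v ∈ S`):
full interchangeability in the subproblem induced by `S`. -/
def SPrI [DecidableEq V] (P : BinaryCSP V α) (S : Set V) (v : V) (a b : α) : Prop :=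
  P.SubFI S v a b

/-- k-interchangeability (KI): `a`, `b` are fully interchangeable in every
subproblem induced by `v` together with `k - 1` other variables. -/
def KI [DecidableEq V] (P : BinaryCSP V α) (k : ℕ) (v : V) (a b : α) : Prop :=
  ∀ T : Finset V, v ∉ T → T.card = k - 1 → P.SubFI (insert v (T : Set V)) v a b

/-- Partial interchangeability (PI) with respect to `S` (where `v ∈ S`). -/
def PI (P : BinaryCSP V α) (S : Set V) (v : V) (a b : α) : Prop :=
  (∀ s, P.Solution s → s v = a →
    ∃ s', P.Solution s' ∧ s' v = b ∧ ∀ w ∉ S, s' w = s w) ∧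
  (∀ s, P.Solution s → s v = b →
    ∃ s', P.Solution s' ∧ s' v = a ∧ ∀ w ∉ S, s' w = s w)

/-- Substitutability (Sub): `a` is substitutable for `b` at variable `v`. -/
def Sub [DecidableEq V] (P : BinaryCSP V α) (v : V) (a b : α) : Prop :=
  ∀ s, P.Solution s → s v = b → P.Solution (Function.update s v a)

/-- Neighborhood substitutability (NSub): `a` is NSub for `b` at variable `v`. -/
def NSub (P : BinaryCSP V α) (v : V) (a b : α) : Prop :=
  ∀ w, P.hasCstr v w → P.Support v b w ⊆ P.Support v a w

/-- Neighborhood partial interchangeability (NPI) given boundary `S` (where `v ∈ S`). -/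
def NPI (P : BinaryCSP V α) (S : Set V) (v : V) (a b : α) : Prop :=
  ∀ w, w ∉ S → P.hasCstr v w → P.Support v a w = P.Support v b w

/-- Directional interchangeability (DirI) with respect to a strict order `r` on variables. -/
def DirI (P : BinaryCSP V α) (r : V → V → Prop) (v : V) (a b : α) : Prop :=
  ∀ w, r w v → P.hasCstr v w → P.Support v a w = P.Support v b w

/-- Dynamic neighborhood interchangeability (DynNI) of `a`, `b` for `v` with respect to
the partial assignment `A` on the set `W` of variables (where `v ∉ W`). -/
def DynNI (P : BinaryCSP V α) (W : Set V) (A : V → α) (v : V) (a b : α) : Prop :=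
  (∀ w, w ∉ W → P.hasCstr v w → P.Support v a w = P.Support v b w) ∧
  (∀ w ∈ W, P.hasCstr v w → (P.compat v a w (A w) ↔ P.compat v b w (A w)))

/-- Full dynamic interchangeability (FDynI) with respect to the partial assignment
`A` on `W` (where `v ∉ W`). -/
def FDynI [DecidableEq V] (P : BinaryCSP V α) (W : Set V) (A : V → α) (v : V) (a b : α) :
    Prop :=
  (∀ s, P.Solution s → (∀ w ∈ W, s w = A w) → s v = a →
    P.Solution (Function.update s v b)) ∧
  (∀ s, P.Solution s → (∀ w ∈ W, s w = A w) → s v = b →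
    P.Solution (Function.update s v a))

/-- Full dynamic substitutability (FDynSub): `a` is fully dynamically substitutable for
`b` with respect to the partial assignment `A` on `W` (where `v ∉ W`). -/
def FDynSub [DecidableEq V] (P : BinaryCSP V α) (W : Set V) (A : V → α) (v : V) (a b : α) :
    Prop :=
  ∀ s, P.Solution s → (∀ w ∈ W, s w = A w) → s v = b → P.Solution (Function.update s v a)

/-- Neighborhood tuple interchangeability (NTI) of `a`, `b` for `v` with respect to the
set `S` of variables (where `v ∉ S`). -/
def NTI (P : BinaryCSP V α) (S : Set V) (v : V) (a b : α) : Prop :=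
  (∀ t, P.SubSolution (insert v S) t → t v = a →
    ∃ t', P.SubSolution (insert v S) t' ∧ t' v = b ∧
      ∀ u ∈ insert v S, ∀ w, w ∉ insert v S → P.hasCstr u w →
        P.Support u (t u) w = P.Support u (t' u) w) ∧
  (∀ t, P.SubSolution (insert v S) t → t v = b →
    ∃ t', P.SubSolution (insert v S) t' ∧ t' v = a ∧
      ∀ u ∈ insert v S, ∀ w, w ∉ insert v S → P.hasCstr u w →
        P.Support u (t u) w = P.Support u (t' u) w)

/-- Forward neighborhood interchangeability (ForwNI) of two assignments on `U`. -/
def ForwNI (P : BinaryCSP V α) (U : Set V) (u u' : V → α) : Prop :=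
  ∀ x ∈ U, ∀ w, w ∉ U → P.hasCstr x w → P.Support x (u x) w = P.Support x (u' x) w

/-- Context dependent interchangeability (CtxDepI): some assignment to the other
variables extends to a solution both with `v = a` and with `v = b`. -/
def CtxDepI [DecidableEq V] (P : BinaryCSP V α) (v : V) (a b : α) : Prop :=
  ∃ t : V → α, P.Solution (Function.update t v a) ∧ P.Solution (Function.update t v b)

/-- Generalized neighborhood substitutability (GNSub): `a` and `b` share at least one
support with respect to each neighboring variable. -/
def GNSub (P : BinaryCSP V α) (v : V) (a b : α) : Prop :=
  ∀ w, P.hasCstr v w → ∃ c ∈ P.dom w, P.compat v a w c ∧ P.compat v b w c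

end BinaryCSP

/-!
A tuple `t` through `v = a` is matched by the tuple obtained from it by changing only the value
at `v` to `b`. Inside the tuple, the values taken by the neighbors of `v` are supports of `a`, hence
of `b`; outside, only the supports of the value at `v` could change, and those of `a` and `b` agree.
-/

namespace BinaryCSP

variable {V α : Type} {P : BinaryCSP V α} {v : V} {a b : α}

theorem SubSolution.mono {S T : Set V} {s : V → α} (hs : P.SubSolution T s) (hST : S ⊆ T) :
    P.SubSolution S s :=
  ⟨fun u hu => hs.1 u (hST hu), fun u hu w hw => hs.2 u (hST hu) w (hST hw)⟩

theorem SubSolution.mem_support {S : Set V} {s : V → α} {w : V} (hs : P.SubSolution S s)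
    (hv : v ∈ S) (hw : w ∈ S) (hvw : P.hasCstr v w) : s w ∈ P.Support v (s v) w :=
  ⟨hs.1 w hw, hs.2 v hv w hw hvw⟩

theorem NI.symm (h : P.NI v a b) : P.NI v b a :=
  fun w hvw => (h w hvw).symm

theorem NI.nSub (h : P.NI v a b) : P.NSub v a b :=
  fun w hvw => (h w hvw).superset

section Update

variable [DecidableEq V]

theorem SubSolution.update_insert {S : Set V} {s : V → α} (hs : P.SubSolution S s)
    (hb : b ∈ P.dom v) (hcompat : ∀ w ∈ S, P.hasCstr v w → P.compat v b w (s w)) :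
    P.SubSolution (insert v S) (Function.update s v b) := by
  constructor
  · intro u hu
    obtain rfl | huv := eq_or_ne u v
    · rwa [Function.update_self]
    · rw [Function.update_of_ne huv]
      exact hs.1 u (Set.mem_of_mem_insert_of_ne hu huv)
  · intro u hu w hw huw
    obtain rfl | huv := eq_or_ne u v
    · have hwu : w ≠ u := fun h => P.hasCstr_irrefl u (h ▸ huw)
      rw [Function.update_self, Function.update_of_ne hwu]
      exact hcompat w (Set.mem_of_mem_insert_of_ne hw hwu) huw
    · have huS : u ∈ S := Set.mem_of_mem_insert_of_ne hu huv
      rw [Function.update_of_ne huv]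
      obtain rfl | hwv := eq_or_ne w v
      · rw [Function.update_self]
        exact P.compat_symm (hcompat u huS (P.hasCstr_symm huw))
      · rw [Function.update_of_ne hwv]
        exact hs.2 u huS w (Set.mem_of_mem_insert_of_ne hw hwv) huw

theorem NSub.subSolution_update {S : Set V} {s : V → α} (h : P.NSub v b (s v))
    (hb : b ∈ P.dom v) (hs : P.SubSolution (insert v S) s) :
    P.SubSolution (insert v S) (Function.update s v b) :=
  (hs.mono (Set.subset_insert v S)).update_insert hb fun w hw hvw =>
    (h w hvw (hs.mem_support (Set.mem_insert v S) (Set.mem_insert_of_mem v hw) hvw)).2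

theorem NI.subFI_insert (h : P.NI v a b) (ha : a ∈ P.dom v) (hb : b ∈ P.dom v) (S : Set V) :
    P.SubFI (insert v S) v a b := by
  constructor
  · rintro s hs rfl
    exact h.symm.nSub.subSolution_update hb hs
  · rintro s hs rfl
    exact h.nSub.subSolution_update ha hs

theorem NI.forwNI_update {s : V → α} (h : P.NI v (s v) b) (U : Set V) :
    P.ForwNI U s (Function.update s v b) := by
  intro u _ w _ huw
  obtain rfl | huv := eq_or_ne u v
  · rw [Function.update_self]
    exact h w huw
  · rw [Function.update_of_ne huv]

end Update

end BinaryCSP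

theorem stmt_12_general {V α : Type} (P : BinaryCSP V α) (v : V) (a b : α)
    (ha : a ∈ P.dom v) (hb : b ∈ P.dom v) (hNI : P.NI v a b) (S : Set V) :
    P.NTI S v a b := by
  classical
  obtain ⟨update_left, update_right⟩ := hNI.subFI_insert ha hb S
  constructor
  · rintro t ht rfl
    exact ⟨Function.update t v b, update_left t ht rfl, Function.update_self ..,
      hNI.forwNI_update _⟩
  · rintro t ht rfl
    exact ⟨Function.update t v a, update_right t ht rfl, Function.update_self ..,
      hNI.symm.forwNI_update _⟩

/-- NI implies NTI with respect to every set `S` of variables with `v ∉ S`. -/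
theorem stmt_12 {V α : Type} [Fintype V] [DecidableEq V] [Fintype α]
    (P : BinaryCSP V α) (v : V) (a b : α)
    (ha : a ∈ P.dom v) (hb : b ∈ P.dom v)
    (hNI : P.NI v a b) :
    ∀ S : Set V, v ∉ S → P.NTI S v a b :=
  fun S _ => stmt_12_general P v a b ha hb hNI S
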